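/- (Sensitivity under needle-perturbation.) Let 0 < α ≤ 1, β > 0, R ≥ 0, and let φ : ℝⁿ×ℝⁿ → ℝ and L : ℝⁿ×ℝⁿ×[a,b] → ℝ be of class C². Let u : [a,b] → ℝⁿ be measurable with ‖u(s)‖ ≤ R for almost every s, let y ∈ ℝⁿ, and set x(t) := y + ∫_a^t ((t−s)^{α−1}/Γ(α)) u(s) ds and, for u' measurable essentially bounded, Φ(u') := φ(x'(a), x'(b)) + ∫_a^b ((b−s)^{β−1}/Γ(β)) L(x'(s), u'(s), s) ds where x'(t) := y + ∫_a^t ((t−s)^{α−1}/Γ(α)) u'(s) ds. Let τ ∈ (a,b) be a right Lebesgue point of both u and s ↦ L(x(s),u(s),s), i.e. lim_{h→0⁺} (1/h)∫_τ^{τ+h} ‖u(s) − u(τ)‖ ds = 0 and lim_{h→0⁺} (1/h)∫_τ^{τ+h} |L(x(s),u(s),s) − L(x(τ),u(τ),τ)| ds = 0, and let v ∈ ℝⁿ with ‖v‖ ≤ R. For 0 < h ≤ b−τ let u_h := v on [τ,τ+h) and u_h := u elsewhere. Then lim_{h→0⁺} ( Φ(u_h) − Φ(u) )/h = ((b−τ)^{β−1}/Γ(β))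 ( L(x(τ),v,τ) − L(x(τ),u(τ),τ) ) + [ ((b−τ)^{α−1}/Γ(α)) ∂₂φ(x(a),x(b)) + ∫_τ^b ((s−τ)^{α−1}/Γ(α)) ((b−s)^{β−1}/Γ(β)) ∂₁L(x(s),u(s),s) ds ] · (v − u(τ)). -/

import Mathlib

open MeasureTheory Set Filter Topology
open scoped RealInnerProductSpace

lemma fr_eventually {τ c : ℝ} (hc : τ < c) : ∀ᶠ h in 𝓝[>] (0:ℝ), 0 < h ∧ τ + h < c := by
  have : Ioo (0:ℝ) (c - τ) ∈ 𝓝[>] (0:ℝ) := Ioo_mem_nhdsGT (by linarith)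
  filter_upwards [this] with h hh
  exact ⟨hh.1, by linarith [hh.2]⟩

lemma fr_avg_cont {F : Type*} [NormedAddCommGroup F] [NormedSpace ℝ F] [CompleteSpace F]
    {g : ℝ → F} {τ c : ℝ} (hc : τ < c) (hg : ContinuousOn g (Icc τ c)) :
    Tendsto (fun h : ℝ => h⁻¹ • ∫ s in τ..(τ + h), g s) (𝓝[>] (0 : ℝ)) (𝓝 (g τ)) := by
  have hmem : Icc τ c ∈ 𝓝[>] τ := mem_of_superset (Ioo_mem_nhdsGT hc) Ioo_subset_Icc_self
  have h1 : HasDerivWithinAt (fun u => ∫ x in τ..u, g x) (g τ) (Ici τ) τ := by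
    apply intervalIntegral.integral_hasDerivWithinAt_right (t := Ioi τ)
    · simp
    · exact ⟨Icc τ c, hmem, hg.aestronglyMeasurable measurableSet_Icc⟩
    · exact (hg τ ⟨le_refl _, hc.le⟩).mono_of_mem_nhdsWithin hmem
  have h2 := (hasDerivWithinAt_iff_tendsto_slope.1 h1).mono_left (nhdsWithin_mono τ (s := Ioi τ) (by
    intro z hz; exact ⟨mem_Ici.2 (le_of_lt (mem_Ioi.1 hz)), ne_of_gt (mem_Ioi.1 hz)⟩))
  have h3 : Tendsto (fun h : ℝ => τ + h) (𝓝[>] 0) (𝓝[>] τ) := by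
    apply tendsto_nhdsWithin_iff.2 ⟨?_, ?_⟩
    · have : Tendsto (fun h : ℝ => τ + h) (𝓝 0) (𝓝 (τ + 0)) := by
        apply Continuous.tendsto; fun_prop
      rw [add_zero] at this
      exact this.mono_left nhdsWithin_le_nhds
    · filter_upwards [self_mem_nhdsWithin] with h hh
      simpa using hh
  refine (h2.comp h3).congr fun h => ?_
  simp [slope_def_module]

lemma fr_avg {F : Type*} [NormedAddCommGroup F] [NormedSpace ℝ F] [CompleteSpace F]
    {f : ℝ → F} {g : ℝ → ℝ} {τ c : ℝ} (hc : τ < c) (hf : IntervalIntegrable f volume τ c)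
    (hg : ContinuousOn g (Icc τ c))
    (hl : Tendsto (fun h : ℝ => h⁻¹ * ∫ s in τ..(τ + h), ‖f s - f τ‖) (𝓝[>] 0) (𝓝 0)) :
    Tendsto (fun h : ℝ => h⁻¹ • ∫ s in τ..(τ + h), g s • f s) (𝓝[>] 0) (𝓝 (g τ • f τ)) := by
  obtain ⟨M, hM⟩ := isCompact_Icc.exists_bound_of_continuousOn hg
  have hA : Tendsto (fun h : ℝ => h⁻¹ • ∫ s in τ..(τ + h), g s • f τ) (𝓝[>] 0) (𝓝 (g τ • f τ)) :=
    fr_avg_cont (g := fun s => g s • f τ) hc (hg.smul continuousOn_const)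
  have hB : Tendsto (fun h : ℝ => h⁻¹ • ∫ s in τ..(τ + h), g s • (f s - f τ)) (𝓝[>] 0) (𝓝 0) := by
    have hz : Tendsto (fun h : ℝ => M * (h⁻¹ * ∫ s in τ..(τ + h), ‖f s - f τ‖)) (𝓝[>] 0) (𝓝 0) := by
      simpa using hl.const_mul M
    refine squeeze_zero_norm' ?_ hz
    filter_upwards [fr_eventually hc] with h hh
    rw [norm_smul, norm_inv, Real.norm_of_nonneg hh.1.le, mul_left_comm]
    refine mul_le_mul_of_nonneg_left ?_ (inv_nonneg.2 hh.1.le)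
    rw [← intervalIntegral.integral_const_mul]
    apply intervalIntegral.norm_integral_le_of_norm_le (by linarith)
    · refine Eventually.of_forall fun s hs => ?_
      rw [norm_smul]
      gcongr
      exact hM s ⟨hs.1.le, by linarith [hs.2]⟩
    · apply IntervalIntegrable.const_mul
      apply IntervalIntegrable.norm
      apply IntervalIntegrable.sub _ (by simp)
      apply hf.mono_set
      rw [uIcc_of_le (by linarith), uIcc_of_le hc.le]
      exact Icc_subset_Icc le_rfl (by linarith)
  have := hB.add hA
  rw [zero_add] at this
  refine this.congr' ?_
  filter_upwards [fr_eventually hc] with h hh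
  have hsub : uIcc τ (τ + h) ⊆ Icc τ c := by
    rw [uIcc_of_le (by linarith)]
    exact Icc_subset_Icc le_rfl (by linarith)
  have hfi : IntervalIntegrable f volume τ (τ + h) := by
    apply hf.mono_set
    rwa [uIcc_of_le hc.le]
  rw [← smul_add, ← intervalIntegral.integral_add]
  · congr 2; ext s; rw [← smul_add]; congr 1; abel
  · exact (hfi.sub (by simp)).continuousOn_smul (hg.mono hsub)
  · exact ((hg.mono hsub).smul continuousOn_const).intervalIntegrable

/-- the fractional kernel -/
noncomputable def frKer (α t : ℝ) : ℝ := t ^ (α - 1) / Real.Gamma α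

lemma frKer_nonneg {α t : ℝ} (hα : 0 < α) (ht : 0 ≤ t) : 0 ≤ frKer α t :=
  div_nonneg (Real.rpow_nonneg ht _) (Real.Gamma_pos_of_pos hα).le

lemma frKer_int {α : ℝ} (hα : 0 < α) (t c d : ℝ) :
    IntervalIntegrable (fun s => frKer α (t - s)) volume c d := by
  have h := (intervalIntegral.intervalIntegrable_rpow' (a := t - c) (b := t - d) (r := α - 1)
    (by linarith)).comp_sub_left t
  simp only [sub_sub_cancel] at h
  exact h.div_const _

lemma frKer_int' {α : ℝ} (hα : 0 < α) (t c d : ℝ) :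
    IntervalIntegrable (fun s => frKer α (s - t)) volume c d := by
  have h := (intervalIntegral.intervalIntegrable_rpow' (a := c - t) (b := d - t) (r := α - 1)
    (by linarith)).comp_sub_right t
  simp only [sub_add_cancel] at h
  exact h.div_const _

lemma frKer_integral {α : ℝ} (hα : 0 < α) (t c d : ℝ) :
    ∫ s in c..d, frKer α (t - s) = (α * Real.Gamma α)⁻¹ * ((t - c) ^ α - (t - d) ^ α) := by
  unfold frKer
  rw [intervalIntegral.integral_div,
    intervalIntegral.integral_comp_sub_left (fun x => x ^ (α - 1)),
    integral_rpow (Or.inl (by linarith))]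
  have := (Real.Gamma_pos_of_pos hα).ne'
  simp only [sub_add_cancel]
  field_simp

lemma frKer_contOn (α : ℝ) {t c d : ℝ} (hd : d < t) :
    ContinuousOn (fun s => frKer α (t - s)) (Icc c d) := by
  unfold frKer
  apply ContinuousOn.div_const
  apply ContinuousOn.rpow_const (by fun_prop)
  intro s hs
  left
  linarith [hs.2]

lemma frKer_contOn' (α : ℝ) {t c d : ℝ} (hd : t < c) :
    ContinuousOn (fun s => frKer α (s - t)) (Icc c d) := by
  unfold frKer
  apply ContinuousOn.div_const
  apply ContinuousOn.rpow_const (by fun_prop)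
  intro s hs
  left
  linarith [hs.1]

lemma frKer_beta {α β τ b : ℝ} (hα : 0 < α) (hβ : 0 < β) (h : τ < b) :
    IntervalIntegrable (fun s => frKer α (s - τ) * frKer β (b - s)) volume τ b := by
  have h1 : τ < (τ + b) / 2 := by linarith
  have h2 : (τ + b) / 2 < b := by linarith
  apply IntervalIntegrable.trans (b := (τ + b) / 2)
  · apply (frKer_int' hα _ _ _).mul_continuousOn
    rw [uIcc_of_le h1.le]
    exact frKer_contOn _ h2
  · apply IntervalIntegrable.continuousOn_mul (frKer_int hβ _ _ _)
    rw [uIcc_of_le h2.le]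
    exact frKer_contOn' _ h1

lemma frKer_anti {α s t : ℝ} (hα : 0 < α) (hα1 : α ≤ 1) (hs : 0 < s) (hst : s ≤ t) :
    frKer α t ≤ frKer α s := by
  unfold frKer
  have := (Real.Gamma_pos_of_pos hα).le
  gcongr ?_ / _
  exact Real.rpow_le_rpow_of_nonpos hs hst (by linarith)

lemma fr_rpow_diff {α σ h : ℝ} (hα1 : α ≤ 1) (hh : 0 < h) (hσ : h ≤ σ) (hα : 0 < α) :
    σ ^ α - (σ - h) ^ α ≤ h * σ ^ (α - 1) := by
  have hσ0 : 0 < σ := by linarith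
  have e1 : (σ - h) ^ α = σ ^ α * (1 - h / σ) ^ α := by
    rw [← Real.mul_rpow hσ0.le (by rw [sub_nonneg, div_le_one hσ0]; exact hσ)]
    congr 1; field_simp
  have e2 : 1 - h / σ ≤ (1 - h / σ) ^ α := by
    rcases hσ.eq_or_lt with rfl | hlt
    · simp [div_self hσ0.ne', Real.zero_rpow hα.ne']
    · have : 0 < 1 - h / σ := by rw [sub_pos, div_lt_one hσ0]; exact hlt
      have h3 := Real.rpow_le_rpow_of_exponent_ge this (by
        have : 0 < h / σ := by positivity
        linarith) hα1
      simpa using h3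
  have e3 : σ ^ (α - 1) = σ ^ α / σ := by rw [Real.rpow_sub hσ0, Real.rpow_one]
  rw [e1, e3]
  have : 0 ≤ σ ^ α := by positivity
  have := mul_le_mul_of_nonneg_left e2 this
  have e4 : h * (σ ^ α / σ) = σ ^ α * (h / σ) := by ring
  rw [e4]; linarith

/-- essentially bounded and measurable on an interval -/
def FrB {F : Type*} [NormedAddCommGroup F] (a b C : ℝ) (w : ℝ → F) : Prop :=
  AEStronglyMeasurable w (volume.restrict (Icc a b)) ∧
    ∀ᵐ s ∂(volume : Measure ℝ), s ∈ Icc a b → ‖w s‖ ≤ C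

lemma FrB.sub {F : Type*} [NormedAddCommGroup F] {a b C C' : ℝ} {w w' : ℝ → F}
    (h : FrB a b C w) (h' : FrB a b C' w') : FrB a b (C + C') (fun s => w s - w' s) := by
  refine ⟨h.1.sub h'.1, ?_⟩
  filter_upwards [h.2, h'.2] with s h1 h2 hs
  exact (norm_sub_le _ _).trans (add_le_add (h1 hs) (h2 hs))

lemma FrB.const {F : Type*} [NormedAddCommGroup F] {a b C : ℝ} {v : F}
    (h : ‖v‖ ≤ C) : FrB a b C (fun _ => v) :=
  ⟨aestronglyMeasurable_const, Eventually.of_forall fun _ _ => h⟩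

lemma FrB.smul_int {F : Type*} [NormedAddCommGroup F] [NormedSpace ℝ F] {a b C c d : ℝ}
    {w : ℝ → F} (h : FrB a b C w) {g : ℝ → ℝ} (hac : a ≤ c) (hcd : c ≤ d) (hdb : d ≤ b)
    (hg : IntervalIntegrable g volume c d) :
    IntervalIntegrable (fun s => g s • w s) volume c d := by
  have hsub : Ioc c d ⊆ Icc a b := fun s hs => ⟨hac.trans hs.1.le, hs.2.trans hdb⟩
  rw [intervalIntegrable_iff_integrableOn_Ioc_of_le hcd] at hg ⊢
  refine Integrable.smul_bdd hg C (h.1.mono_set hsub) ?_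
  rw [ae_restrict_iff' measurableSet_Ioc]
  filter_upwards [h.2] with s h1 hs
  exact h1 (hsub hs)

lemma FrB.int {F : Type*} [NormedAddCommGroup F] [NormedSpace ℝ F] {a b C c d : ℝ}
    {w : ℝ → F} (h : FrB a b C w) (hac : a ≤ c) (hcd : c ≤ d) (hdb : d ≤ b) :
    IntervalIntegrable w volume c d := by
  simpa using h.smul_int (g := fun _ => 1) hac hcd hdb (by simp)

lemma FrB.norm_le {F : Type*} [NormedAddCommGroup F] [NormedSpace ℝ F] {a b C c d : ℝ}
    {w : ℝ → F} (h : FrB a b C w) {g : ℝ → ℝ} (hac : a ≤ c) (hcd : c ≤ d) (hdb : d ≤ b)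
    (hg : IntervalIntegrable g volume c d) (hg0 : ∀ s ∈ Ioo c d, 0 ≤ g s) :
    ‖∫ s in c..d, g s • w s‖ ≤ C * ∫ s in c..d, g s := by
  rw [← intervalIntegral.integral_const_mul]
  apply intervalIntegral.norm_integral_le_of_norm_le hcd _ (hg.const_mul _)
  filter_upwards [h.2, Measure.ae_ne volume d] with s h1 h2 hs
  have h3 := hg0 s ⟨hs.1, lt_of_le_of_ne hs.2 h2⟩
  rw [norm_smul, Real.norm_of_nonneg h3, mul_comm]
  exact mul_le_mul_of_nonneg_right (h1 ⟨hac.trans hs.1.le, hs.2.trans hdb⟩) h3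

lemma FrB.comp {E F : Type*} [NormedAddCommGroup E] [ProperSpace E] [NormedAddCommGroup F]
    {a b C C' : ℝ} {x w : ℝ → E} {G : E × E × ℝ → F} (hG : Continuous G)
    (hx : FrB a b C x) (hw : FrB a b C' w) : ∃ D, FrB a b D (fun s => G (x s, w s, s)) := by
  have hK : IsCompact (Metric.closedBall (0:E) C ×ˢ (Metric.closedBall (0:E) C' ×ˢ Icc a b)) :=
    (isCompact_closedBall _ _).prod ((isCompact_closedBall _ _).prod isCompact_Icc)
  obtain ⟨D, hD⟩ := hK.exists_bound_of_continuousOn hG.continuousOn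
  refine ⟨D, hG.comp_aestronglyMeasurable
    (hx.1.prodMk (hw.1.prodMk measurable_id.aestronglyMeasurable)), ?_⟩
  filter_upwards [hx.2, hw.2] with s h1 h2 hs
  exact hD _ ⟨by simpa using h1 hs, by simpa using h2 hs, hs⟩

lemma FrB.of_cont {F : Type*} [NormedAddCommGroup F] {a b : ℝ} {w : ℝ → F}
    (h : ContinuousOn w (Icc a b)) {C : ℝ} (hC : ∀ s ∈ Icc a b, ‖w s‖ ≤ C) : FrB a b C w :=
  ⟨h.aestronglyMeasurable measurableSet_Icc, Eventually.of_forall hC⟩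

section
set_option linter.unusedSectionVars false
variable {E : Type*} [NormedAddCommGroup E] [NormedSpace ℝ E]

/-- state associated with a control -/
noncomputable def frX (α a : ℝ) (y : E) (w : ℝ → E) (t : ℝ) : E :=
  y + ∫ s in a..t, frKer α (t - s) • w s

lemma frX_holder {α a b R : ℝ} (hα : 0 < α) (hα1 : α ≤ 1) (hR : 0 ≤ R) {y : E} {w : ℝ → E}
    (hw : FrB a b R w) {s t : ℝ} (has : a ≤ s) (hst : s ≤ t) (htb : t ≤ b) :
    ‖frX α a y w t - frX α a y w s‖ ≤ 2 * R * (α * Real.Gamma α)⁻¹ * (t - s) ^ α := by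
  have hA : 0 ≤ (α * Real.Gamma α)⁻¹ := by
    have := Real.Gamma_pos_of_pos hα; positivity
  set A := (α * Real.Gamma α)⁻¹
  have i1 := hw.smul_int has hst htb (frKer_int hα t s t)
  have i2 := hw.smul_int le_rfl has (hst.trans htb) (frKer_int hα t a s)
  have i3 := hw.smul_int le_rfl has (hst.trans htb) (frKer_int hα s a s)
  have e : frX α a y w t - frX α a y w s = (∫ r in s..t, frKer α (t - r) • w r)
      - ∫ r in a..s, (frKer α (s - r) - frKer α (t - r)) • w r := by
    unfold frX
    simp only [sub_smul]
    rw [← intervalIntegral.integral_add_adjacent_intervals i2 i1,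
      intervalIntegral.integral_sub i3 i2]
    abel
  have b1 := hw.norm_le has hst htb (frKer_int hα t s t)
    (fun r hr => frKer_nonneg hα (by linarith [hr.2]))
  have b2 := hw.norm_le le_rfl has (hst.trans htb)
    ((frKer_int hα s a s).sub (frKer_int hα t a s))
    (fun r hr => sub_nonneg.2 (frKer_anti hα hα1 (by linarith [hr.2]) (by linarith)))
  rw [frKer_integral hα] at b1
  rw [intervalIntegral.integral_sub (frKer_int hα s a s) (frKer_int hα t a s),
    frKer_integral hα, frKer_integral hα] at b2
  simp only [sub_self, Real.zero_rpow hα.ne', sub_zero] at b1 b2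
  have b3 : A * (s - a) ^ α - A * ((t - a) ^ α - (t - s) ^ α) ≤ A * (t - s) ^ α := by
    have : (s - a) ^ α ≤ (t - a) ^ α :=
      Real.rpow_le_rpow (by linarith) (by linarith) hα.le
    nlinarith
  rw [e]
  refine (norm_sub_le _ _).trans ?_
  have := mul_le_mul_of_nonneg_left b3 hR
  calc _ ≤ R * (A * (t - s) ^ α) + R * (A * (t - s) ^ α) := add_le_add b1 (b2.trans this)
    _ = _ := by ring

lemma frX_contOn {α a b R : ℝ} (hα : 0 < α) (hα1 : α ≤ 1) (hR : 0 ≤ R) {y : E} {w : ℝ → E}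
    (hw : FrB a b R w) : ContinuousOn (frX α a y w) (Icc a b) := by
  intro s hs
  rw [ContinuousWithinAt, tendsto_iff_norm_sub_tendsto_zero]
  have hz : Tendsto (fun t => 2 * R * (α * Real.Gamma α)⁻¹ * |t - s| ^ α) (𝓝[Icc a b] s) (𝓝 0) := by
    have : Continuous (fun t : ℝ => 2 * R * (α * Real.Gamma α)⁻¹ * |t - s| ^ α) := by
      apply continuous_const.mul
      exact Continuous.rpow_const (by fun_prop) (fun _ => Or.inr hα.le)
    have := (this.tendsto s).mono_left (nhdsWithin_le_nhds (s := Icc a b))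
    simpa [Real.zero_rpow hα.ne'] using this
  refine squeeze_zero' (Eventually.of_forall fun _ => norm_nonneg _) ?_ hz
  filter_upwards [self_mem_nhdsWithin] with t ht
  rcases le_total s t with h | h
  · rw [abs_of_nonneg (by linarith)]
    exact frX_holder hα hα1 hR hw hs.1 h ht.2
  · rw [abs_of_nonpos (by linarith), norm_sub_rev, neg_sub]
    exact frX_holder hα hα1 hR hw ht.1 h hs.2

lemma frX_bound {α a b R : ℝ} (hα : 0 < α) (hα1 : α ≤ 1) (hR : 0 ≤ R) {y : E} {w : ℝ → E}
    (hw : FrB a b R w) {t : ℝ} (ht : t ∈ Icc a b) :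
    ‖frX α a y w t‖ ≤ ‖y‖ + 2 * R * (α * Real.Gamma α)⁻¹ * (b - a) ^ α := by
  have h := frX_holder (y := y) hα hα1 hR hw le_rfl ht.1 ht.2
  have e : frX α a y w a = y := by simp [frX]
  rw [e] at h
  have h2 : ‖frX α a y w t‖ ≤ ‖y‖ + ‖frX α a y w t - y‖ := by
    simpa using norm_add_le y (frX α a y w t - y)
  have h3 : (t - a) ^ α ≤ (b - a) ^ α :=
    Real.rpow_le_rpow (by linarith [ht.1]) (by linarith [ht.2]) hα.le
  have hA : 0 ≤ (α * Real.Gamma α)⁻¹ := by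
    have := Real.Gamma_pos_of_pos hα; positivity
  refine h2.trans ?_
  gcongr
  refine h.trans ?_
  gcongr

lemma frX_frB {α a b R : ℝ} (hα : 0 < α) (hα1 : α ≤ 1) (hR : 0 ≤ R) {y : E} {w : ℝ → E}
    (hw : FrB a b R w) :
    FrB a b (‖y‖ + 2 * R * (α * Real.Gamma α)⁻¹ * (b - a) ^ α) (frX α a y w) :=
  FrB.of_cont (frX_contOn hα hα1 hR hw) fun _ hs => frX_bound hα hα1 hR hw hs

/-- needle perturbation -/
noncomputable def frU (u : ℝ → E) (v : E) (τ h : ℝ) : ℝ → E :=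
  fun s => if τ ≤ s ∧ s < τ + h then v else u s

lemma frU_frB {a b R τ : ℝ} {u : ℝ → E} {v : E} (hu : FrB a b R u) (hv : ‖v‖ ≤ R) (h : ℝ) :
    FrB a b R (frU u v τ h) := by
  constructor
  · have : frU u v τ h = (Ico τ (τ + h)).piecewise (fun _ => v) u := by
      classical
      ext s; simp only [frU, Set.piecewise, mem_Ico]
    rw [this]
    exact AEStronglyMeasurable.piecewise measurableSet_Ico aestronglyMeasurable_const hu.1.restrict
  · filter_upwards [hu.2] with s h1 hs
    unfold frU
    split_ifs
    · exact hv
    · exact h1 hs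

lemma frX_before {α a τ : ℝ} {y : E} {u : ℝ → E} {v : E} {h t : ℝ} (hat : a ≤ t) (ht : t ≤ τ) :
    frX α a y (frU u v τ h) t = frX α a y u t := by
  unfold frX
  congr 1
  apply intervalIntegral.integral_congr_Ioo_of_le hat
  intro s hs
  have : ¬ (τ ≤ s ∧ s < τ + h) := fun hh => by linarith [hh.1, hs.2]
  simp [frU, this]

lemma frX_diff {α a b R τ : ℝ} (hα : 0 < α) {y : E} {u : ℝ → E} {v : E}
    (hu : FrB a b R u) (hv : ‖v‖ ≤ R) (haτ : a ≤ τ) {h t : ℝ} (hh : 0 < h)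
    (ht : τ ≤ t) (htb : t ≤ b) :
    frX α a y (frU u v τ h) t - frX α a y u t =
      ∫ s in τ..(min t (τ + h)), frKer α (t - s) • (v - u s) := by
  have hm1 : τ ≤ min t (τ + h) := le_min ht (by linarith)
  have hm2 : min t (τ + h) ≤ t := min_le_left _ _
  set m := min t (τ + h) with hm
  have hd : FrB a b (R + R) (fun s => frU u v τ h s - u s) := (frU_frB hu hv h).sub hu
  have i1 := (frU_frB (τ := τ) hu hv h).smul_int le_rfl (haτ.trans ht) htb (frKer_int hα t a t)
  have i2 := hu.smul_int le_rfl (haτ.trans ht) htb (frKer_int hα t a t)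
  have j1 := hd.smul_int le_rfl haτ (ht.trans htb) (frKer_int hα t a τ)
  have j2 := hd.smul_int haτ hm1 (hm2.trans htb) (frKer_int hα t τ m)
  have j3 := hd.smul_int (haτ.trans hm1) hm2 htb (frKer_int hα t m t)
  have e1 : frX α a y (frU u v τ h) t - frX α a y u t =
      ∫ s in a..t, frKer α (t - s) • (frU u v τ h s - u s) := by
    unfold frX
    simp only [smul_sub]
    rw [intervalIntegral.integral_sub i1 i2]
    abel
  have z1 : ∫ s in a..τ, frKer α (t - s) • (frU u v τ h s - u s) = ∫ s in a..τ, (0:E) := by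
    apply intervalIntegral.integral_congr_Ioo_of_le haτ
    intro s hs
    have : ¬ (τ ≤ s ∧ s < τ + h) := fun hh => by linarith [hh.1, hs.2]
    simp [frU, this]
  have z2 : ∫ s in τ..m, frKer α (t - s) • (frU u v τ h s - u s) =
      ∫ s in τ..m, frKer α (t - s) • (v - u s) := by
    apply intervalIntegral.integral_congr_Ioo_of_le hm1
    intro s hs
    have : (τ ≤ s ∧ s < τ + h) := ⟨hs.1.le, hs.2.trans_le (min_le_right _ _)⟩
    simp [frU, this]
  have z3 : ∫ s in m..t, frKer α (t - s) • (frU u v τ h s - u s) = ∫ s in m..t, (0:E) := by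
    apply intervalIntegral.integral_congr_Ioo_of_le hm2
    intro s hs
    have : ¬ (τ ≤ s ∧ s < τ + h) := fun hh =>
      absurd hs.1 (not_lt.2 (le_min hs.2.le hh.2.le))
    simp [frU, this]
  rw [e1, ← intervalIntegral.integral_add_adjacent_intervals (j1.trans j2) j3,
    ← intervalIntegral.integral_add_adjacent_intervals j1 j2, z1, z2, z3]
  simp

lemma frX_diff_bound {α a b R τ : ℝ} (hα : 0 < α) {y : E} {u : ℝ → E} {v : E}
    (hu : FrB a b R u) (hv : ‖v‖ ≤ R) (haτ : a ≤ τ) {h t : ℝ} (hh : 0 < h)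
    (ht : τ ≤ t) (htb : t ≤ b) :
    ‖frX α a y (frU u v τ h) t - frX α a y u t‖ ≤
      (R + R) * ((α * Real.Gamma α)⁻¹ * ((t - τ) ^ α - (t - min t (τ + h)) ^ α)) := by
  have hm1 : τ ≤ min t (τ + h) := le_min ht (by linarith)
  have hm2 : min t (τ + h) ≤ t := min_le_left _ _
  rw [frX_diff hα hu hv haτ hh ht htb, ← frKer_integral hα]
  exact ((FrB.const hv).sub hu).norm_le haτ hm1 (hm2.trans htb) (frKer_int hα _ _ _)
    fun s hs => frKer_nonneg hα (by linarith [hs.2])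

lemma frX_diff_far {α a b R τ : ℝ} (hα : 0 < α) (hα1 : α ≤ 1) (hR : 0 ≤ R)
    {y : E} {u : ℝ → E} {v : E}
    (hu : FrB a b R u) (hv : ‖v‖ ≤ R) (haτ : a ≤ τ) {h t : ℝ} (hh : 0 < h)
    (ht : τ + h ≤ t) (htb : t ≤ b) :
    ‖frX α a y (frU u v τ h) t - frX α a y u t‖ ≤
      h * ((R + R) * α⁻¹ * frKer α (t - τ)) := by
  have h1 := frX_diff_bound (y := y) hα hu hv haτ hh (by linarith) htb
  have h2 := fr_rpow_diff hα1 hh (σ := t - τ) (by linarith) hα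
  rw [min_eq_right ht] at h1
  have hG := Real.Gamma_pos_of_pos hα
  refine h1.trans ?_
  rw [← sub_sub]
  calc _ ≤ (R + R) * ((α * Real.Gamma α)⁻¹ * (h * (t - τ) ^ (α - 1))) := by gcongr
    _ = _ := by unfold frKer; field_simp

lemma frX_diff_near {α a b R τ : ℝ} (hα : 0 < α) (hR : 0 ≤ R)
    {y : E} {u : ℝ → E} {v : E}
    (hu : FrB a b R u) (hv : ‖v‖ ≤ R) (haτ : a ≤ τ) {h t : ℝ} (hh : 0 < h)
    (ht : τ ≤ t) (ht2 : t ≤ τ + h) (htb : t ≤ b) :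
    ‖frX α a y (frU u v τ h) t - frX α a y u t‖ ≤ (R + R) * ((α * Real.Gamma α)⁻¹ * h ^ α) := by
  have h1 := frX_diff_bound (y := y) hα hu hv haτ hh ht htb
  rw [min_eq_left ht2, sub_self, Real.zero_rpow hα.ne', sub_zero] at h1
  have hG := Real.Gamma_pos_of_pos hα
  refine h1.trans ?_
  have : (t - τ) ^ α ≤ h ^ α := Real.rpow_le_rpow (by linarith) (by linarith) hα.le
  gcongr

lemma frX_deriv [CompleteSpace E] {α a b R τ : ℝ} (hα : 0 < α) {y : E} {u : ℝ → E} {v : E}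
    (hu : FrB a b R u) (hv : ‖v‖ ≤ R) (haτ : a ≤ τ) {t : ℝ}
    (ht : τ < t) (htb : t ≤ b)
    (hl : Tendsto (fun h : ℝ => h⁻¹ * ∫ s in τ..(τ + h), ‖u s - u τ‖) (𝓝[>] 0) (𝓝 0)) :
    Tendsto (fun h : ℝ => h⁻¹ • (frX α a y (frU u v τ h) t - frX α a y u t)) (𝓝[>] 0)
      (𝓝 (frKer α (t - τ) • (v - u τ))) := by
  have hc : τ < (τ + t) / 2 := by linarith
  have hc2 : (τ + t) / 2 < t := by linarith
  have := fr_avg (f := fun s => v - u s) (g := fun s => frKer α (t - s)) hc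
    (((FrB.const hv).sub hu).int haτ hc.le (by linarith)) (frKer_contOn _ hc2) (by
      refine hl.congr fun h => ?_
      congr 2; ext s; rw [norm_sub_rev]; congr 1; abel)
  refine this.congr' ?_
  filter_upwards [fr_eventually ht] with h hh
  rw [frX_diff hα hu hv haτ hh.1 ht.le htb, min_eq_right hh.2.le]

lemma fr_chain {f : E → ℝ} {f' : E →L[ℝ] ℝ} {p w : E} {q : ℝ → E} (hf : HasFDerivAt f f' p)
    (hq : Tendsto (fun h : ℝ => h⁻¹ • (q h - p)) (𝓝[>] 0) (𝓝 w)) :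
    Tendsto (fun h : ℝ => h⁻¹ * (f (q h) - f p)) (𝓝[>] 0) (𝓝 (f' w)) := by
  have h0 : Tendsto (fun h : ℝ => q h - p) (𝓝[>] 0) (𝓝 0) := by
    have h1 : Tendsto (fun h : ℝ => h) (𝓝[>] 0) (𝓝 0) := nhdsWithin_le_nhds
    have := h1.smul hq
    rw [zero_smul] at this
    refine this.congr' ?_
    filter_upwards [self_mem_nhdsWithin] with h hh
    rw [smul_inv_smul₀ (ne_of_gt hh)]
  have := (hf.hasFDerivWithinAt (s := univ)).lim h0 (by simp) hq
  simpa using this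

end

section
variable {E : Type*} [NormedAddCommGroup E] [InnerProductSpace ℝ E] [ProperSpace E]
  [CompleteSpace E]

lemma fr_grad {L : E × E × ℝ → ℝ} (hL : ContDiff ℝ 2 L) :
    ∃ G : E × E × ℝ → E, Continuous G ∧
      ∀ z q, HasGradientAt (fun z => L (z, q)) (G (z, q)) z := by
  refine ⟨fun p => (InnerProductSpace.toDual ℝ E).symm
    ((fderiv ℝ L p).comp (ContinuousLinearMap.inl ℝ E (E × ℝ))), ?_, ?_⟩
  · have h1 : Continuous (fderiv ℝ L) := hL.continuous_fderiv (by norm_num)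
    exact (InnerProductSpace.toDual ℝ E).symm.continuous.comp (h1.clm_comp continuous_const)
  · intro z q
    rw [hasGradientAt_iff_hasFDerivAt, LinearIsometryEquiv.apply_symm_apply]
    exact ((hL.differentiable (by norm_num)) (z, q)).hasFDerivAt.comp z
      (hasFDerivAt_prodMk_left z q)

lemma fr_lip {L : E × E × ℝ → ℝ} (hL : ContDiff ℝ 2 L) (M R a b : ℝ) :
    ∃ C : ℝ, 0 ≤ C ∧ ∀ p q w : E, ∀ s : ℝ, ‖p‖ ≤ M → ‖q‖ ≤ M → ‖w‖ ≤ R → s ∈ Icc a b →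
      |L (p, w, s) - L (q, w, s)| ≤ C * ‖p - q‖ := by
  have hK : IsCompact (Metric.closedBall (0:E) M ×ˢ (Metric.closedBall (0:E) R ×ˢ Icc a b)) :=
    (isCompact_closedBall _ _).prod ((isCompact_closedBall _ _).prod isCompact_Icc)
  have hl : LocallyLipschitz L := (hL.of_le (by norm_num)).locallyLipschitz
  obtain ⟨C, hC⟩ := LocallyLipschitzOn.exists_lipschitzOnWith_of_compact hK
    (hl.locallyLipschitzOn)
  refine ⟨C, C.2, fun p q w s hp hq hw hs => ?_⟩
  have := hC.dist_le_mul (p, w, s) ⟨by simpa using hp, by simpa using hw, hs⟩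
    (q, w, s) ⟨by simpa using hq, by simpa using hw, hs⟩
  simpa [Prod.dist_eq, Real.dist_eq, dist_eq_norm] using this

lemma fr_far {a b α β R τ : ℝ} (hα0 : 0 < α) (hα1 : α ≤ 1) (hβ : 0 < β) (hR : 0 ≤ R)
    {L : E × E × ℝ → ℝ} (hL : ContDiff ℝ 2 L) {G : E × E × ℝ → E} (hGc : Continuous G)
    (hG : ∀ z q, HasGradientAt (fun z => L (z, q)) (G (z, q)) z)
    {y v : E} {u : ℝ → E} (hu : FrB a b R u) (hv : ‖v‖ ≤ R) (hτ : τ ∈ Ioo a b)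
    (hl : Tendsto (fun h : ℝ => h⁻¹ * ∫ s in τ..(τ + h), ‖u s - u τ‖) (𝓝[>] 0) (𝓝 0)) :
    Tendsto (fun h : ℝ => h⁻¹ * ∫ s in (τ + h)..b, frKer β (b - s) *
        (L (frX α a y (frU u v τ h) s, u s, s) - L (frX α a y u s, u s, s))) (𝓝[>] 0)
      (𝓝 ⟪∫ s in τ..b, (frKer α (s - τ) * frKer β (b - s)) • G (frX α a y u s, u s, s),
        v - u τ⟫) := by
  obtain ⟨C, hC0, hC⟩ := fr_lip hL (‖y‖ + 2 * R * (α * Real.Gamma α)⁻¹ * (b - a) ^ α) R a b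
  obtain ⟨D, hD⟩ := FrB.comp hGc (frX_frB (y := y) hα0 hα1 hR hu) hu
  have hgi := hD.smul_int hτ.1.le hτ.2.le le_rfl (frKer_beta hα0 hβ hτ.2)
  have e1 : ⟪∫ s in τ..b, (frKer α (s - τ) * frKer β (b - s)) • G (frX α a y u s, u s, s),
        v - u τ⟫ = ∫ s in τ..b, frKer β (b - s) *
          ⟪G (frX α a y u s, u s, s), frKer α (s - τ) • (v - u τ)⟫ := by
    rw [real_inner_comm, ← innerSL_apply_apply ℝ,
      ← ContinuousLinearMap.intervalIntegral_comp_comm _ hgi]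
    congr 1; ext s
    rw [innerSL_apply_apply, real_inner_comm, real_inner_smul_left, real_inner_smul_right]
    ring
  rw [e1]
  have key : Tendsto (fun h : ℝ => ∫ s in τ..b, (Ioi (τ + h)).indicator (fun s => h⁻¹ *
      (frKer β (b - s) *
        (L (frX α a y (frU u v τ h) s, u s, s) - L (frX α a y u s, u s, s)))) s) (𝓝[>] 0)
      (𝓝 (∫ s in τ..b, frKer β (b - s) *
          ⟪G (frX α a y u s, u s, s), frKer α (s - τ) • (v - u τ)⟫)) := by
    apply intervalIntegral.tendsto_integral_filter_of_dominated_convergence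
      (fun s => (C * ((R + R) * α⁻¹)) * (frKer α (s - τ) * frKer β (b - s)))
    · refine Eventually.of_forall fun h => ?_
      rw [uIoc_of_le hτ.2.le]
      apply AEStronglyMeasurable.indicator _ measurableSet_Ioi
      obtain ⟨D1, hD1⟩ := FrB.comp hL.continuous
        (frX_frB (y := y) hα0 hα1 hR (frU_frB (τ := τ) hu hv h)) hu
      obtain ⟨D2, hD2⟩ := FrB.comp hL.continuous (frX_frB (y := y) hα0 hα1 hR hu) hu
      have hi := (hD1.sub hD2).smul_int hτ.1.le hτ.2.le le_rfl (frKer_int hβ b τ b)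
      rw [intervalIntegrable_iff_integrableOn_Ioc_of_le hτ.2.le] at hi
      exact hi.1.const_mul _
    · filter_upwards [fr_eventually hτ.2] with h hh
      filter_upwards [hu.2] with s hs hsm
      rw [uIoc_of_le hτ.2.le] at hsm
      have hsI : s ∈ Icc a b := ⟨hτ.1.le.trans hsm.1.le, hsm.2⟩
      have k1 : 0 ≤ frKer α (s - τ) := frKer_nonneg hα0 (by linarith [hsm.1])
      have k2 : 0 ≤ frKer β (b - s) := frKer_nonneg hβ (by linarith [hsm.2])
      by_cases hc : s ∈ Ioi (τ + h)
      · rw [indicator_of_mem hc, norm_mul, norm_mul, norm_inv, Real.norm_of_nonneg hh.1.le,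
          Real.norm_of_nonneg k2, Real.norm_eq_abs]
        have h1 := hC _ _ (u s) s (frX_bound (y := y) hα0 hα1 hR (frU_frB (τ := τ) hu hv h) hsI)
          (frX_bound (y := y) hα0 hα1 hR hu hsI) (hs hsI) hsI
        have h2 := frX_diff_far (y := y) hα0 hα1 hR hu hv hτ.1.le hh.1 (le_of_lt hc) hsm.2
        have h3 := h1.trans (mul_le_mul_of_nonneg_left h2 hC0)
        have h4 := hh.1
        calc _ ≤ h⁻¹ * (frKer β (b - s) * (C * (h * ((R + R) * α⁻¹ * frKer α (s - τ))))) := by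
              gcongr
          _ = _ := by field_simp
      · rw [indicator_of_notMem hc, norm_zero]
        positivity
    · exact (frKer_beta hα0 hβ hτ.2).const_mul _
    · refine Eventually.of_forall fun s hsm => ?_
      rw [uIoc_of_le hτ.2.le] at hsm
      have h1 := frX_deriv (y := y) hα0 hu hv hτ.1.le hsm.1 hsm.2 hl
      have h2 := fr_chain (hasGradientAt_iff_hasFDerivAt.1 (hG (frX α a y u s) (u s, s))) h1
      have h3 := h2.const_mul (frKer β (b - s))
      rw [InnerProductSpace.toDual_apply_apply] at h3
      refine h3.congr' ?_
      filter_upwards [fr_eventually hsm.1] with h hh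
      rw [indicator_of_mem (mem_Ioi.2 hh.2)]
      ring
  refine key.congr' ?_
  filter_upwards [fr_eventually hτ.2] with h hh
  rw [intervalIntegral.integral_of_le hτ.2.le, setIntegral_indicator measurableSet_Ioi,
    Ioc_inter_Ioi, max_eq_right (by linarith [hh.1]),
    intervalIntegral.integral_of_le hh.2.le, integral_const_mul]

lemma fr_near {a b α β R τ : ℝ} (hα0 : 0 < α) (hα1 : α ≤ 1) (hβ : 0 < β) (hR : 0 ≤ R)
    {L : E × E × ℝ → ℝ} (hL : ContDiff ℝ 2 L)
    {y v : E} {u : ℝ → E} (hu : FrB a b R u) (hv : ‖v‖ ≤ R) (hτ : τ ∈ Ioo a b) :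
    Tendsto (fun h : ℝ => h⁻¹ * ∫ s in τ..(τ + h), frKer β (b - s) *
        (L (frX α a y (frU u v τ h) s, v, s) - L (frX α a y u s, v, s))) (𝓝[>] 0) (𝓝 0) := by
  obtain ⟨C, hC0, hC⟩ := fr_lip hL (‖y‖ + 2 * R * (α * Real.Gamma α)⁻¹ * (b - a) ^ α) R a b
  have hτ2 := hτ.2
  have hc : τ < (τ + b) / 2 := by linarith
  have hc2 : (τ + b) / 2 < b := by linarith
  obtain ⟨M, hM⟩ := isCompact_Icc.exists_bound_of_continuousOn
    (frKer_contOn β (t := b) (c := τ) (d := (τ + b) / 2) hc2)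
  have hz : Tendsto (fun h : ℝ => M * (C * ((R + R) * ((α * Real.Gamma α)⁻¹ * h ^ α))))
      (𝓝[>] 0) (𝓝 0) := by
    have : Continuous (fun h : ℝ => M * (C * ((R + R) * ((α * Real.Gamma α)⁻¹ * h ^ α)))) := by
      have : Continuous (fun h : ℝ => h ^ α) := Real.continuous_rpow_const hα0.le
      fun_prop
    have := (this.tendsto 0).mono_left (nhdsWithin_le_nhds (s := Ioi 0))
    simpa [Real.zero_rpow hα0.ne'] using this
  refine squeeze_zero_norm' ?_ hz
  filter_upwards [fr_eventually hc] with h hh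
  have hb := intervalIntegral.norm_integral_le_of_norm_le_const (a := τ) (b := τ + h)
    (f := fun s => frKer β (b - s) *
        (L (frX α a y (frU u v τ h) s, v, s) - L (frX α a y u s, v, s)))
    (C := M * (C * ((R + R) * ((α * Real.Gamma α)⁻¹ * h ^ α)))) (by
      intro s hs
      rw [uIoc_of_le (by linarith)] at hs
      have hsI : s ∈ Icc a b := ⟨hτ.1.le.trans hs.1.le, by linarith [hs.2]⟩
      have h0 := hM s ⟨hs.1.le, by linarith [hs.2]⟩
      have h1 := hC _ _ v s (frX_bound (y := y) hα0 hα1 hR (frU_frB (τ := τ) hu hv h) hsI)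
        (frX_bound (y := y) hα0 hα1 hR hu hsI) hv hsI
      have h2 := frX_diff_near (y := y) hα0 hR hu hv hτ.1.le hh.1 hs.1.le hs.2 hsI.2
      have h3 := h1.trans (mul_le_mul_of_nonneg_left h2 hC0)
      rw [norm_mul, Real.norm_eq_abs (_ - _)]
      exact mul_le_mul h0 h3 (abs_nonneg _) ((norm_nonneg _).trans h0))
  rw [add_sub_cancel_left, abs_of_pos hh.1] at hb
  rw [norm_mul, norm_inv, Real.norm_of_nonneg hh.1.le, inv_mul_le_iff₀ hh.1, mul_comm h]
  exact hb

lemma fr_main {a b α β R τ : ℝ} (hα0 : 0 < α) (hα1 : α ≤ 1) (hβ : 0 < β) (hR : 0 ≤ R)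
    {L : E × E × ℝ → ℝ} (hL : ContDiff ℝ 2 L)
    {φ : E × E → ℝ} (hφ : ContDiff ℝ 2 φ)
    {y v : E} {u : ℝ → E} (hu : FrB a b R u) (hv : ‖v‖ ≤ R) (hτ : τ ∈ Ioo a b)
    (hl : Tendsto (fun h : ℝ => h⁻¹ * ∫ s in τ..(τ + h), ‖u s - u τ‖) (𝓝[>] 0) (𝓝 0))
    (hLebL : Tendsto (fun h : ℝ => h⁻¹ * ∫ s in τ..(τ + h),
        |L (frX α a y u s, u s, s) - L (frX α a y u τ, u τ, τ)|) (𝓝[>] (0 : ℝ)) (𝓝 0))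
    {Φ : (ℝ → E) → ℝ}
    (hΦ : ∀ w, Φ w = φ (frX α a y w a, frX α a y w b) +
        ∫ s in a..b, frKer β (b - s) * L (frX α a y w s, w s, s)) :
    Tendsto (fun h : ℝ => (Φ (frU u v τ h) - Φ u) / h) (𝓝[>] (0 : ℝ))
      (𝓝 (frKer β (b - τ) * (L (frX α a y u τ, v, τ) - L (frX α a y u τ, u τ, τ))
        + ⟪frKer α (b - τ) • gradient (fun z => φ (frX α a y u a, z)) (frX α a y u b)
            + ∫ s in τ..b, (frKer α (s - τ) * frKer β (b - s)) •
              gradient (fun z => L (z, u s, s)) (frX α a y u s),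
          v - u τ⟫)) := by
  obtain ⟨G, hGc, hG⟩ := fr_grad hL
  have hτ1 := hτ.1
  have hτ2 := hτ.2
  have hc : τ < (τ + b) / 2 := by linarith
  have hc2 : (τ + b) / 2 < b := by linarith
  have t3 := fr_far (y := y) hα0 hα1 hβ hR hL hGc hG hu hv hτ hl
  have t2 := fr_near (α := α) (y := y) hα0 hα1 hβ hR hL hu hv hτ
  have hXu := frX_frB (y := y) hα0 hα1 hR hu
  obtain ⟨D2, hD2⟩ := FrB.comp hL.continuous hXu hu
  obtain ⟨D3, hD3⟩ := FrB.comp hL.continuous hXu (FrB.const hv)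
  have hKc := frKer_contOn β (t := b) (c := τ) (d := (τ + b) / 2) hc2
  -- boundary term
  have t1 : Tendsto (fun h : ℝ => h⁻¹ * (φ (frX α a y u a, frX α a y (frU u v τ h) b)
      - φ (frX α a y u a, frX α a y u b))) (𝓝[>] 0)
      (𝓝 ⟪gradient (fun z => φ (frX α a y u a, z)) (frX α a y u b),
        frKer α (b - τ) • (v - u τ)⟫) := by
    have hd : DifferentiableAt ℝ (fun z => φ (frX α a y u a, z)) (frX α a y u b) := by
      have := hφ.differentiable (by norm_num)
      fun_prop
    have := fr_chain (hasGradientAt_iff_hasFDerivAt.1 hd.hasGradientAt)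
      (frX_deriv (y := y) hα0 hu hv hτ.1.le hτ.2 le_rfl hl)
    rwa [InnerProductSpace.toDual_apply_apply] at this
  have t4 : Tendsto (fun h : ℝ => h⁻¹ * ∫ s in τ..(τ + h), frKer β (b - s) *
      L (frX α a y u s, v, s)) (𝓝[>] 0) (𝓝 (frKer β (b - τ) * L (frX α a y u τ, v, τ))) := by
    refine fr_avg_cont (g := fun s => frKer β (b - s) * L (frX α a y u s, v, s)) hc ?_
    apply hKc.mul
    apply hL.continuous.comp_continuousOn
    have : ContinuousOn (frX α a y u) (Icc τ ((τ + b) / 2)) :=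
      (frX_contOn hα0 hα1 hR hu).mono (Icc_subset_Icc hτ1.le hc2.le)
    fun_prop
  have t5 : Tendsto (fun h : ℝ => h⁻¹ * ∫ s in τ..(τ + h), frKer β (b - s) *
      L (frX α a y u s, u s, s)) (𝓝[>] 0) (𝓝 (frKer β (b - τ) * L (frX α a y u τ, u τ, τ))) :=
    fr_avg (f := fun s => L (frX α a y u s, u s, s)) (g := fun s => frKer β (b - s)) hc
      (hD2.int hτ1.le hc.le hc2.le) hKc hLebL
  have hgr : ∀ s, gradient (fun z => L (z, u s, s)) (frX α a y u s)
      = G (frX α a y u s, u s, s) := fun s => (hG _ _).gradient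
  have tt := ((t1.add t2).add (t4.sub t5)).add t3
  have e : ∀ᶠ h in 𝓝[>] (0:ℝ), (Φ (frU u v τ h) - Φ u) / h =
      h⁻¹ * (φ (frX α a y u a, frX α a y (frU u v τ h) b)
      - φ (frX α a y u a, frX α a y u b)) +
      h⁻¹ * (∫ s in τ..(τ + h), frKer β (b - s) *
        (L (frX α a y (frU u v τ h) s, v, s) - L (frX α a y u s, v, s))) +
      (h⁻¹ * (∫ s in τ..(τ + h), frKer β (b - s) * L (frX α a y u s, v, s)) -
      h⁻¹ * (∫ s in τ..(τ + h), frKer β (b - s) * L (frX α a y u s, u s, s))) +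
      h⁻¹ * ∫ s in (τ + h)..b, frKer β (b - s) *
        (L (frX α a y (frU u v τ h) s, u s, s) - L (frX α a y u s, u s, s)) := by
    filter_upwards [fr_eventually hτ2] with h hh
    have hh1 := hh.1
    have hh2 := hh.2
    have hUh := frU_frB (τ := τ) hu hv h
    have hXh := frX_frB (y := y) hα0 hα1 hR hUh
    obtain ⟨D4, hD4⟩ := FrB.comp hL.continuous hXh hUh
    obtain ⟨D5, hD5⟩ := FrB.comp hL.continuous hXh (FrB.const hv)
    obtain ⟨D6, hD6⟩ := FrB.comp hL.continuous hXh hu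
    have q1 : τ ≤ τ + h := by linarith
    have q2 : a ≤ τ + h := by linarith
    have i41 := hD4.smul_int le_rfl hτ1.le hτ2.le (frKer_int hβ b a τ)
    have i42 := hD4.smul_int hτ1.le q1 hh2.le (frKer_int hβ b τ (τ + h))
    have i43 := hD4.smul_int q2 hh2.le le_rfl (frKer_int hβ b (τ + h) b)
    have i21 := hD2.smul_int le_rfl hτ1.le hτ2.le (frKer_int hβ b a τ)
    have i22 := hD2.smul_int hτ1.le q1 hh2.le (frKer_int hβ b τ (τ + h))
    have i23 := hD2.smul_int q2 hh2.le le_rfl (frKer_int hβ b (τ + h) b)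
    have i32 := hD3.smul_int hτ1.le q1 hh2.le (frKer_int hβ b τ (τ + h))
    have i52 := hD5.smul_int hτ1.le q1 hh2.le (frKer_int hβ b τ (τ + h))
    have i63 := hD6.smul_int q2 hh2.le le_rfl (frKer_int hβ b (τ + h) b)
    simp only [smul_eq_mul] at i41 i42 i43 i21 i22 i23 i32 i52 i63
    have z1 : ∫ s in a..τ, frKer β (b - s) * L (frX α a y (frU u v τ h) s, frU u v τ h s, s) =
        ∫ s in a..τ, frKer β (b - s) * L (frX α a y u s, u s, s) := by
      apply intervalIntegral.integral_congr_Ioo_of_le hτ1.le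
      intro s hs
      have h1 : ¬ (τ ≤ s ∧ s < τ + h) := fun hh => by linarith [hh.1, hs.2]
      have h2 : frU u v τ h s = u s := by simp [frU, h1]
      simp only [h2, frX_before hs.1.le hs.2.le]
    have z2 : ∫ s in τ..(τ + h),
        frKer β (b - s) * L (frX α a y (frU u v τ h) s, frU u v τ h s, s) =
        ∫ s in τ..(τ + h), frKer β (b - s) * L (frX α a y (frU u v τ h) s, v, s) := by
      apply intervalIntegral.integral_congr_Ioo_of_le q1
      intro s hs
      have h1 : (τ ≤ s ∧ s < τ + h) := ⟨hs.1.le, hs.2⟩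
      have h2 : frU u v τ h s = v := by simp [frU, h1]
      simp only [h2]
    have z3 : ∫ s in (τ + h)..b,
        frKer β (b - s) * L (frX α a y (frU u v τ h) s, frU u v τ h s, s) =
        ∫ s in (τ + h)..b, frKer β (b - s) * L (frX α a y (frU u v τ h) s, u s, s) := by
      apply intervalIntegral.integral_congr_Ioo_of_le hh2.le
      intro s hs
      have h1 : ¬ (τ ≤ s ∧ s < τ + h) := fun hh => by linarith [hh.2, hs.1]
      have h2 : frU u v τ h s = u s := by simp [frU, h1]
      simp only [h2]
    have ea : frX α a y (frU u v τ h) a = frX α a y u a := frX_before le_rfl hτ1.le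
    rw [hΦ, hΦ, ea, ← intervalIntegral.integral_add_adjacent_intervals (i41.trans i42) i43,
      ← intervalIntegral.integral_add_adjacent_intervals i41 i42,
      ← intervalIntegral.integral_add_adjacent_intervals (i21.trans i22) i23,
      ← intervalIntegral.integral_add_adjacent_intervals i21 i22, z1, z2, z3]
    simp only [mul_sub (frKer β _)]
    rw [intervalIntegral.integral_sub i52 i32, intervalIntegral.integral_sub i63 i23, div_eq_inv_mul]
    ring
  refine (tt.congr' (e.mono fun h hh => hh.symm)).trans (le_of_eq (congrArg 𝓝 ?_))
  simp only [hgr]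
  rw [inner_add_left, real_inner_smul_left, real_inner_smul_right]
  ring

end


theorem stmt_17 (n : ℕ) (hn : 1 ≤ n) (a b : ℝ) (hab : a < b)
    (α β : ℝ) (hα0 : 0 < α) (hα1 : α ≤ 1) (hβ : 0 < β) (R : ℝ) (hR : 0 ≤ R)
    (φ : EuclideanSpace ℝ (Fin n) × EuclideanSpace ℝ (Fin n) → ℝ)
    (L : EuclideanSpace ℝ (Fin n) × EuclideanSpace ℝ (Fin n) × ℝ → ℝ)
    (hφ : ContDiff ℝ 2 φ) (hL : ContDiff ℝ 2 L)
    (u : ℝ → EuclideanSpace ℝ (Fin n)) (hum : Measurable u)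
    (hub : ∀ᵐ s ∂(volume : Measure ℝ), s ∈ Icc a b → ‖u s‖ ≤ R)
    (y : EuclideanSpace ℝ (Fin n)) (x : ℝ → EuclideanSpace ℝ (Fin n))
    (hx : ∀ t, x t = y + ∫ s in a..t, ((t - s) ^ (α - 1) / Real.Gamma α) • u s)
    (τ : ℝ) (hτ : τ ∈ Ioo a b) (v : EuclideanSpace ℝ (Fin n)) (hv : ‖v‖ ≤ R)
    (hLebu : Tendsto (fun h : ℝ => h⁻¹ * ∫ s in τ..(τ + h), ‖u s - u τ‖)
      (𝓝[>] (0 : ℝ)) (𝓝 0))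
    (hLebL : Tendsto (fun h : ℝ => h⁻¹ * ∫ s in τ..(τ + h),
        |L (x s, u s, s) - L (x τ, u τ, τ)|) (𝓝[>] (0 : ℝ)) (𝓝 0))
    (Φ : (ℝ → EuclideanSpace ℝ (Fin n)) → ℝ)
    (hΦ : ∀ u' : ℝ → EuclideanSpace ℝ (Fin n),
      Φ u' = φ (y + ∫ s in a..a, ((a - s) ^ (α - 1) / Real.Gamma α) • u' s,
                y + ∫ s in a..b, ((b - s) ^ (α - 1) / Real.Gamma α) • u' s) +
        ∫ s in a..b, ((b - s) ^ (β - 1) / Real.Gamma β) *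
          L (y + ∫ r in a..s, ((s - r) ^ (α - 1) / Real.Gamma α) • u' r, u' s, s)) :
    Tendsto (fun h : ℝ =>
        (Φ (fun s => if τ ≤ s ∧ s < τ + h then v else u s) - Φ u) / h)
      (𝓝[>] (0 : ℝ))
      (𝓝 (((b - τ) ^ (β - 1) / Real.Gamma β) * (L (x τ, v, τ) - L (x τ, u τ, τ))
        + ⟪((b - τ) ^ (α - 1) / Real.Gamma α) • gradient (fun z => φ (x a, z)) (x b)
            + ∫ s in τ..b, (((s - τ) ^ (α - 1) / Real.Gamma α) *
                ((b - s) ^ (β - 1) / Real.Gamma β)) •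
              gradient (fun z => L (z, u s, s)) (x s),
          v - u τ⟫)) := by
  have hu : FrB a b R u := ⟨hum.aestronglyMeasurable, hub⟩
  have hxe : x = frX α a y u := funext hx
  subst hxe
  exact fr_main hα0 hα1 hβ hR hL hφ hu hv hτ hLebu hLebL hΦ
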